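/- arXiv:1401.2437 — 4 statements merged into one kernel-verified Lean document; each statement's English description precedes it below -/
import Mathlib

section
/- Let n ≥ 1 and let M be an invertible n×n matrix over the field ZMod 2 (i.e. M ∈ GL_n(F₂)). Then the number of nonzero entries of M is at most n² − n + 1. -/
/-!
The rows of an invertible matrix are linearly independent, hence pairwise distinct, so at most one
row is the all-ones vector. Each of the other rows, at least `n - 1` in number, contains a zero,
which leaves at most `n² - (n - 1)` nonzero entries.
-/

/-- An invertible `n × n` matrix over `F₂` has at most `n² - n + 1` nonzero entries.
(Corollary bounding the CNOT count for multiplication by an invertible matrix.) -/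
theorem stmt_2 (n : ℕ) (hn : 1 ≤ n) (M : Matrix (Fin n) (Fin n) (ZMod 2))
    (hM : IsUnit M) :
    (Finset.univ.filter fun p : Fin n × Fin n => M p.1 p.2 ≠ 0).card ≤ n ^ 2 - n + 1 := by
  have hinj : Function.Injective M.row :=
    (Matrix.linearIndependent_rows_of_isUnit hM).injective
  set Z : Finset (Fin n × Fin n) := Finset.univ.filter fun p => M p.1 p.2 = 0 with hZ
  have hsum : Z.card + (Finset.univ.filter fun p : Fin n × Fin n => M p.1 p.2 ≠ 0).card
      = n ^ 2 := by
    rw [hZ, Finset.card_filter_add_card_filter_not]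
    simp [sq]
  -- the complement of the projection of `Z` is the set of all-ones rows
  have hone : ((Z.image Prod.fst)ᶜ).card ≤ 1 := by
    have key : ∀ i ∈ (Z.image Prod.fst)ᶜ, ∀ k, M i k = 1 := by
      intro i hi k
      refine Fin.eq_one_of_ne_zero _ fun (h : M i k = 0) => ?_
      exact Finset.mem_compl.mp hi (Finset.mem_image.mpr ⟨(i, k), by simp [hZ, h], rfl⟩)
    refine Finset.card_le_one.mpr fun i hi j hj => hinj (funext fun k => ?_)
    exact (key i hi k).trans (key j hj k).symm
  have himage : (Z.image Prod.fst).card ≤ Z.card := Finset.card_image_le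
  have hcompl := Finset.card_add_card_compl (Z.image Prod.fst)
  rw [Fintype.card_fin] at hcompl
  omega
end

section
/- Let n ≥ 2 and let M be an n×n matrix over ZMod 2 whose number of nonzero entries is at least n² − n + 2. Then M has two identical rows: there exist indices i ≠ i' in Fin n with M i j = M i' j for all j. In particular, such an M is not invertible. -/
/-!
`M` has at most `n - 2` zero entries, so at most `n - 2` rows contain a zero. The two or more
remaining rows have only nonzero entries, and `1` is the only nonzero element of `ZMod 2`, so
these rows coincide; hence `det M = 0`.
-/

/-- An `n × n` matrix over `F₂` with at least `n² - n + 2` nonzero entries has two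
identical rows, and in particular is not invertible. -/
theorem stmt_3 (n : ℕ) (hn : 2 ≤ n) (M : Matrix (Fin n) (Fin n) (ZMod 2))
    (hw : n ^ 2 - n + 2 ≤ (Finset.univ.filter fun p : Fin n × Fin n => M p.1 p.2 ≠ 0).card) :
    (∃ i i' : Fin n, i ≠ i' ∧ ∀ j : Fin n, M i j = M i' j) ∧ ¬ IsUnit M := by
  have hrows : ∃ i i' : Fin n, i ≠ i' ∧ ∀ j : Fin n, M i j = M i' j := by
    let Z := Finset.univ.filter fun p : Fin n × Fin n => M p.1 p.2 = 0
    have hsum : Z.card +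
        (Finset.univ.filter fun p : Fin n × Fin n => M p.1 p.2 ≠ 0).card = n ^ 2 := by
      have h := Finset.card_filter_add_card_filter_not (s := Finset.univ)
        (fun p : Fin n × Fin n => M p.1 p.2 = 0)
      simpa [Z, sq] using h
    have hle : n ≤ n ^ 2 := Nat.le_self_pow two_ne_zero n
    -- The rows containing a zero are the first coordinates of the zero positions.
    have himage : (Z.image Prod.fst).card ≤ Z.card := Finset.card_image_le
    have hcompl : 1 < (Z.image Prod.fst)ᶜ.card := by
      rw [Finset.card_compl, Fintype.card_fin]
      omega
    obtain ⟨i, hi, i', hi', hne⟩ := Finset.one_lt_card.mp hcompl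
    have hone : ∀ k ∈ (Z.image Prod.fst)ᶜ, ∀ j, M k j = 1 := by
      intro k hk j
      have hk0 : M k j ≠ 0 := fun h0 =>
        Finset.mem_compl.mp hk (Finset.mem_image.mpr ⟨(k, j), by simp [Z, h0], rfl⟩)
      exact Fin.eq_one_of_ne_zero _ hk0
    exact ⟨i, i', hne, fun j => (hone i hi j).trans (hone i' hi' j).symm⟩
  refine ⟨hrows, fun hM => ?_⟩
  obtain ⟨i, i', hne, heq⟩ := hrows
  have hdet : M.det = 0 := Matrix.det_zero_of_row_eq hne (funext heq)
  exact ((Matrix.isUnit_iff_isUnit_det M).mp hM).ne_zero hdet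
end

section
/- Let n > m ≥ 1 with m ≤ ⌊n/2⌋, suppose the trinomial p = X^n + X^m + 1 ∈ (ZMod 2)[X] is irreducible, and let F = (ZMod 2)[X]/(p) with x the residue class of X, so that 1, x, …, x^{n−1} is an F₂-basis of F. Then there exists a function S : Fin n → Finset (Fin n) with (S j).card ≤ 3 for every j, such that for every a ∈ F with coordinate vector (a₀, …, a_{n−1}) with respect to this basis, the j-th coordinate of a² equals Σ_{i ∈ S j} aᵢ. Consequently the matrix of the F₂-linear squaring map a ↦ a² with respect to this basis has at most 3n nonzero entries. -/
open Polynomial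

/-!
Squaring is additive in characteristic 2, so `a²` is determined by the powers `x^(2i)`, `i < n`.
Since `xⁿ = xᵐ + 1`, at most two reductions bring `x^(2i)` below degree `n` (the second one
suffices because `2m ≤ n`), and the result is recorded by `sqCoeff`. Reading this off columnwise,
the index `i` can contribute to the `j`-th coordinate only if `2i` is one of
`j`, `j + n`, `j + n - m`, `j + 2n - 2m` or `j + 2n - m`, where the third and
the fourth require `j ≥ m` and the last requires `j < m`. So three of them remain when `j < m`.
When `j ≥ m` four remain, and they can all be even only if `n` and `m` are both even; in that case
the trinomial would be the square of `X^(n/2) + X^(m/2) + 1`, which irreducibility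
excludes.
-/

/-- The coefficient of `x^j` in the reduction of `x^(2i)` modulo `Xⁿ + Xᵐ + 1`. The exponents
`2i - n`, `2i - n + m`, `2i - 2n + 2m`, `2i - 2n + m` are encoded without subtraction, and the
indicators are added in `ZMod 2` because two exponents coincide when `n = 2m`. -/
def sqCoeff (n m i j : ℕ) : ZMod 2 :=
  if 2 * i < n then (if j = 2 * i then 1 else 0)
  else if 2 * i + m < 2 * n then
    (if j + n = 2 * i then 1 else 0) + (if j + n = 2 * i + m then 1 else 0)
  else (if j + n = 2 * i then 1 else 0) + (if j + 2 * n = 2 * i + 2 * m then 1 else 0)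
    + (if j + 2 * n = 2 * i + m then 1 else 0)

lemma not_both_even {n m : ℕ} (hirr : Irreducible (X ^ n + X ^ m + 1 : Polynomial (ZMod 2))) :
    ¬ (Even n ∧ Even m) := by
  rintro ⟨⟨a, rfl⟩, ⟨b, rfl⟩⟩
  refine hirr.not_isSquare ⟨X ^ a + X ^ b + 1, ?_⟩
  rw [← sq, add_pow_char, add_pow_char]
  ring

/-- Only three values of `2i` can contribute to the `j`-th coordinate. -/
lemma sqCoeff_support {n m : ℕ} (hmn : m < n)
    (hpar : ¬ (Even n ∧ Even m)) (j : ℕ) :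
    ∃ a b c : ℕ, ∀ i < n, sqCoeff n m i j ≠ 0 → 2 * i = a ∨ 2 * i = b ∨ 2 * i = c := by
  have key : ∀ i < n, sqCoeff n m i j ≠ 0 →
      2 * i = j ∨ 2 * i = j + n ∨ (2 * i + m = j + n ∧ m ≤ j) ∨
        (2 * i + 2 * m = j + 2 * n ∧ m ≤ j) ∨ (2 * i + m = j + 2 * n ∧ j < m) := by
    intro i hi h
    by_contra hcon
    apply h
    unfold sqCoeff
    split_ifs <;> first | omega | simp
  rw [Nat.even_iff, Nat.even_iff] at hpar
  rcases lt_or_ge j m with hj | hj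
  · exact ⟨j, j + n, j + 2 * n - m, fun i hi h => by have := key i hi h; omega⟩
  · rcases Nat.mod_two_eq_zero_or_one n with hn | hn
    · rcases Nat.mod_two_eq_zero_or_one j with hj2 | hj2
      · exact ⟨j, j + n, j + 2 * n - 2 * m, fun i hi h => by have := key i hi h; omega⟩
      · exact ⟨j + n - m, 0, 0, fun i hi h => by have := key i hi h; omega⟩
    · rcases Nat.mod_two_eq_zero_or_one j with hj2 | hj2
      · exact ⟨j, j + n - m, j + 2 * n - 2 * m, fun i hi h => by have := key i hi h; omega⟩
      · exact ⟨j + n, j + n - m, 0, fun i hi h => by have := key i hi h; omega⟩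

/-- A sum against the indicator of a single exponent `k < n`, given by a predicate `P`. -/
lemma sum_indicator_smul {A : Type*} [CommRing A] [Algebra (ZMod 2) A] (x : A) {n : ℕ}
    (P : ℕ → Prop) [DecidablePred P] (k : ℕ) (hk : k < n) (hP : ∀ j, P j ↔ j = k) :
    ∑ j : Fin n, (if P j then (1 : ZMod 2) else 0) • x ^ (j : ℕ) = x ^ k := by
  rw [Finset.sum_eq_single (⟨k, hk⟩ : Fin n)]
  · simp [hP]
  · intro b _ hb
    have : (b : ℕ) ≠ k := fun h => hb (Fin.ext h)
    simp [hP, this]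
  · simp

lemma pow_two_mul_eq_sum {A : Type*} [CommRing A] [Algebra (ZMod 2) A] {n m : ℕ}
    (hm2 : m ≤ n / 2) (x : A) (hx : x ^ n = x ^ m + 1) (i : ℕ) (hi : i < n) :
    x ^ (2 * i) = ∑ j : Fin n, sqCoeff n m i j • x ^ (j : ℕ) := by
  have red : ∀ k, x ^ (k + n) = x ^ (k + m) + x ^ k := fun k => by
    rw [pow_add, hx, pow_add]; ring
  unfold sqCoeff
  split_ifs with h1 h2
  · rw [sum_indicator_smul x (fun j => j = 2 * i) (2 * i) h1 (fun _ => Iff.rfl)]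
  · simp only [add_smul, Finset.sum_add_distrib]
    obtain ⟨k, hk⟩ := Nat.exists_eq_add_of_le' (not_lt.mp h1)
    rw [sum_indicator_smul x (fun j => j + n = 2 * i) k (by omega) (fun _ => by omega),
      sum_indicator_smul x (fun j => j + n = 2 * i + m) (k + m) (by omega) (fun _ => by omega),
      hk, red, add_comm]
  · simp only [add_smul, Finset.sum_add_distrib]
    obtain ⟨k, hk⟩ := Nat.exists_eq_add_of_le' (not_lt.mp h1)
    obtain ⟨l, hl⟩ : ∃ l, k + m = l + n := ⟨k + m - n, by omega⟩
    rw [sum_indicator_smul x (fun j => j + n = 2 * i) k (by omega) (fun _ => by omega),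
      sum_indicator_smul x (fun j => j + 2 * n = 2 * i + 2 * m) (l + m) (by omega)
        (fun _ => by omega),
      sum_indicator_smul x (fun j => j + 2 * n = 2 * i + m) l (by omega) (fun _ => by omega),
      hk, red, hl, red]
    ring

/-- In `F = F₂[X]/(Xⁿ + Xᵐ + 1)` with the power basis `1, x, …, x^{n-1}`, each coordinate
of `a²` is the sum of at most three coordinates of `a`; consequently the matrix of the
squaring map has at most `3n` nonzero entries. -/
theorem stmt_4 (n m : ℕ) (hm : 1 ≤ m) (hmn : m < n) (hm2 : m ≤ n / 2)
    (hirr : Irreducible (X ^ n + X ^ m + 1 : Polynomial (ZMod 2))) :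
    ∃ S : Fin n → Finset (Fin n),
      (∀ j : Fin n, (S j).card ≤ 3) ∧
      (∀ c : Fin n → ZMod 2,
        (∑ i : Fin n, c i •
            AdjoinRoot.root (X ^ n + X ^ m + 1 : Polynomial (ZMod 2)) ^ (i : ℕ)) ^ 2
          = ∑ j : Fin n, (∑ i ∈ S j, c i) •
              AdjoinRoot.root (X ^ n + X ^ m + 1 : Polynomial (ZMod 2)) ^ (j : ℕ)) ∧
      (Finset.univ.filter fun p : Fin n × Fin n => p.1 ∈ S p.2).card ≤ 3 * n := by
  classical
  have hcard : ∀ j : Fin n,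
      (Finset.univ.filter fun i : Fin n => sqCoeff n m i j ≠ 0).card ≤ 3 := by
    intro j
    obtain ⟨a, b, c, h⟩ := sqCoeff_support hmn (not_both_even hirr) j
    refine le_trans (Finset.card_le_card_of_injOn (t := ({a, b, c} : Finset ℕ))
      (fun i : Fin n => 2 * (i : ℕ)) ?_ ?_) Finset.card_le_three
    · intro i hi
      simpa using h i i.2 (by simpa using hi)
    · intro i _ i' _ hii
      apply Fin.ext
      simp only at hii
      omega
  refine ⟨fun j => Finset.univ.filter fun i : Fin n => sqCoeff n m i j ≠ 0, hcard, ?_, ?_⟩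
  · intro c
    have : Fact (Irreducible (X ^ n + X ^ m + 1 : Polynomial (ZMod 2))) := ⟨hirr⟩
    set x := AdjoinRoot.root (X ^ n + X ^ m + 1 : Polynomial (ZMod 2)) with hxdef
    have : CharP (AdjoinRoot (X ^ n + X ^ m + 1 : Polynomial (ZMod 2))) 2 :=
      charP_of_injective_algebraMap (algebraMap (ZMod 2) _).injective 2
    have hx : x ^ n = x ^ m + 1 := by
      have h0 : x ^ n + x ^ m + 1 = 0 := by
        have := AdjoinRoot.mk_self (f := (X ^ n + X ^ m + 1 : Polynomial (ZMod 2)))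
        simpa only [map_add, map_pow, map_one, AdjoinRoot.mk_X] using this
      exact CharTwo.add_eq_zero.mp ((add_assoc _ _ _).symm.trans h0)
    -- Elements of `ZMod 2` are idempotent, and nonzero ones equal `1`.
    have hsq : ∀ t : ZMod 2, t ^ 2 = t := by decide
    have hite : ∀ s t : ZMod 2, (if s ≠ 0 then t else 0) = t * s := by decide
    rw [sum_pow_char]
    simp only [Finset.sum_filter, hite, _root_.smul_pow, hsq, ← pow_mul, Finset.sum_smul]
    rw [Finset.sum_comm]
    refine Finset.sum_congr rfl fun i _ => ?_
    rw [mul_comm, pow_two_mul_eq_sum hm2 x hx i i.2, Finset.smul_sum]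
    simp only [mul_smul]
  · rw [Finset.card_filter, Fintype.sum_prod_type_right]
    simp only [← Finset.card_filter]
    refine (Finset.sum_le_card_nsmul Finset.univ _ 3 fun j _ => ?_).trans ?_
    · simpa using hcard j
    · simp [mul_comm]
end

section
/- Let K be a field of characteristic 2, let a₂, a₆ ∈ K with a₆ ≠ 0, and let W be the ordinary binary elliptic curve y² + xy = x³ + a₂x² + a₆ over K. Under the hypotheses and notation of the Al-Daoud formula — Z₁ ≠ 0, P₁ = (X₁/Z₁, Y₁/Z₁²) and P₂ = (x₂, y₂) affine points on W with X₁/Z₁ ≠ x₂, and A = Y₁ + y₂Z₁², B = X₁ + x₂Z₁, C = BZ₁, Z₃ = C², X₃ = A² + C(A + B² + a₂C), Y₃ = (x₂Z₃ + X₃)(AC + Z₃) + (y₂ + x₂)Z₃² — the triple (X₃, Y₃, Z₃) satisfies the projective López–Dahab curve equation: Y₃² + X₃Y₃Z₃ = X₃³Z₃ + a₂X₃²Z₃² + a₆Z₃⁴. -/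
/-!
The triple `(X₃, Y₃, Z₃)` is the López–Dahab representative of the affine sum `P₂ + P₁`: since
`y₁ + y₂ = A / Z₁²` and `x₁ + x₂ = B / Z₁`, the chord through the two points has slope `A / C`,
and in characteristic 2 the chord formulas become `X₃ / Z₃` and `Y₃ / Z₃²`. The affine sum lies
on the curve by `WeierstrassCurve.Affine.equation_add`, and multiplying its equation by `Z₃⁴`
gives the projective equation.
-/

/-- The output `(X₃, Y₃, Z₃)` of the Al-Daoud et al. addition formula satisfies the
projective López–Dahab curve equation `Y₃² + X₃Y₃Z₃ = X₃³Z₃ + a₂X₃²Z₃² + a₆Z₃⁴`, i.e.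
the output of the paper's addition circuit is again a point on the curve. -/
theorem stmt_13 {K : Type*} [Field K] [CharP K 2] (a₂ a₆ : K) (ha₆ : a₆ ≠ 0)
    (W : WeierstrassCurve.Affine K) (hW : W = ⟨1, a₂, 0, 0, a₆⟩)
    (X₁ Y₁ Z₁ : K) (hZ₁ : Z₁ ≠ 0) (x₂ y₂ : K)
    (h₁ : W.Equation (X₁ / Z₁) (Y₁ / Z₁ ^ 2)) (h₂ : W.Equation x₂ y₂)
    (hx : X₁ / Z₁ ≠ x₂)
    (A B C Z₃ X₃ Y₃ : K)
    (hA : A = Y₁ + y₂ * Z₁ ^ 2) (hB : B = X₁ + x₂ * Z₁) (hC : C = B * Z₁)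
    (hZ₃ : Z₃ = C ^ 2)
    (hX₃ : X₃ = A ^ 2 + C * (A + B ^ 2 + a₂ * C))
    (hY₃ : Y₃ = (x₂ * Z₃ + X₃) * (A * C + Z₃) + (y₂ + x₂) * Z₃ ^ 2) :
    Y₃ ^ 2 + X₃ * Y₃ * Z₃ = X₃ ^ 3 * Z₃ + a₂ * X₃ ^ 2 * Z₃ ^ 2 + a₆ * Z₃ ^ 4 := by
  classical
  have h2 : (2 : K) = 0 := CharTwo.two_eq_zero
  have hB0 : B ≠ 0 := by
    intro h
    apply hx
    rw [div_eq_iff hZ₁]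
    linear_combination hB.symm.trans h - x₂ * Z₁ * h2
  have hC0 : C ≠ 0 := hC ▸ mul_ne_zero hB0 hZ₁
  have hZ0 : Z₃ ≠ 0 := hZ₃ ▸ pow_ne_zero 2 hC0
  have hdx : x₂ - X₁ / Z₁ = B / Z₁ := by
    rw [hB]
    field_simp
    linear_combination -X₁ * h2
  have hdy : y₂ - Y₁ / Z₁ ^ 2 = A / Z₁ ^ 2 := by
    rw [hA]
    field_simp
    linear_combination -Y₁ * h2
  have hslope : W.slope x₂ (X₁ / Z₁) y₂ (Y₁ / Z₁ ^ 2) = A / C := by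
    rw [WeierstrassCurve.Affine.slope_of_X_ne hx.symm, hdx, hdy, hC]
    field_simp
  -- The sum is taken as `P₂ + P₁` because `Y₃` is expressed through `(x₂, y₂)`.
  have hadd := WeierstrassCurve.Affine.equation_add h₂ h₁ (fun h => hx h.1.symm)
  rw [hslope] at hadd
  have hX : W.addX x₂ (X₁ / Z₁) (A / C) = X₃ / Z₃ := by
    have hsum : X₁ / Z₁ = x₂ - B / Z₁ := by rw [← hdx]; ring
    have hBZ : B / Z₁ = B ^ 2 / C := by rw [hC]; field_simp
    rw [WeierstrassCurve.Affine.addX, hsum, hBZ, hW, hX₃, hZ₃]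
    field_simp
    linear_combination (-a₂ * C - x₂ * C) * C * h2
  have hY : W.addY x₂ (X₁ / Z₁) y₂ (A / C) = Y₃ / Z₃ ^ 2 := by
    rw [WeierstrassCurve.Affine.addY, WeierstrassCurve.Affine.negAddY, hX,
      WeierstrassCurve.Affine.negY, hW, hY₃, hZ₃]
    field_simp
    linear_combination -(A * X₃ + C * X₃ + (y₂ + x₂) * C ^ 3) * h2
  rw [hX, hY, hW, WeierstrassCurve.Affine.equation_iff] at hadd
  field_simp at hadd
  linear_combination hadd
end
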